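/- For all real x ≠ y, (2π)^{−2} ∫_ℝ ∫_ℝ [ e^{−i((s−i)³/3 + (s−i)x)} · e^{i((t+i)³/3 + (t+i)y)} / ( i((s−i) − (t+i)) ) ] dt ds = K_Airy(x, y), where the double integral is over the horizontal lines Im z′ = −1 (variable z′ = s − i) and Im w′ = +1 (variable w′ = t + i), on which the integrand is absolutely integrable. -/

import Mathlib

open Filter Topology

/-- The Airy function `Ai(x) = (1/π) ∫₀^∞ cos(s³/3 + sx) ds`, the improper
integral being the limit of `∫₀^T` as `T → ∞`. -/
noncomputable def Ai (x : ℝ) : ℝ :=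
  (1 / Real.pi) *
    limUnder atTop fun T : ℝ => ∫ s in (0 : ℝ)..T, Real.cos (s ^ 3 / 3 + s * x)

/-- The Airy kernel `K_Airy(x, y) = (Ai(x) Ai'(y) - Ai'(x) Ai(y))/(x - y)` for
`x ≠ y`, and `K_Airy(y, y) = Ai'(y)² - y Ai(y)²` on the diagonal. -/
noncomputable def KAiry (x y : ℝ) : ℝ :=
  if x = y then (deriv Ai y) ^ 2 - y * (Ai y) ^ 2
  else (Ai x * deriv Ai y - deriv Ai x * Ai y) / (x - y)

/-!
Reflecting the lower line turns the kernel into `1 / (z + w)` with `z` and `w` both in the upper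
half plane, and `∂_z - ∂_w` annihilates it. Applied to `e^{i(z³/3 + zx)} e^{i(w³/3 + wy)}` this
derivation produces the factor `i(z² - w² + x - y)`, and `(z² - w²) / (z + w) = z - w` decouples the
two variables. Integrating by parts, `x - y` times the double integral is therefore a combination of
products of the single integrals of `e^{i(z³/3 + zx)}` and `z e^{i(z³/3 + zx)}` over horizontal
lines. Shifting the contour to the real axis identifies the first with `2π Ai(x)`, and
differentiating in `x` identifies the second with `-2πi Ai'(x)`.
-/

open MeasureTheory Complex

theorem integral_prod_comp_add_mul_sub_deriv_eq_zero {𝕜 : Type*} [RCLike 𝕜]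
    {k F F' G G' : ℝ → 𝕜} (hF : Integrable F) (hF' : Integrable F')
    (hG : Integrable G) (hG' : Integrable G')
    (dF : ∀ s, HasDerivAt F (F' s) s) (dG : ∀ t, HasDerivAt G (G' t) t)
    (hk : Integrable fun p : ℝ × ℝ => k (p.1 + p.2) * (F' p.1 * G p.2 - F p.1 * G' p.2)) :
    ∫ p : ℝ × ℝ, k (p.1 + p.2) * (F' p.1 * G p.2 - F p.1 * G' p.2) = 0 := by
  -- In the coordinates `(u, s) = (s + t, s)` the integrand is `k u * d/ds (F s * G (u - s))`.
  have shear : MeasurePreserving (fun q : ℝ × ℝ => (q.2, q.1 - q.2)) :=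
    measurePreserving_prod_sub_swap volume volume
  have hFG := (shear.integrable_comp_of_integrable (hF.mul_prod hG)).prod_right_ae
  have hFG' := (shear.integrable_comp_of_integrable
    ((hF'.mul_prod hG).sub (hF.mul_prod hG'))).prod_right_ae
  have inner_eq_zero : ∀ᵐ u : ℝ, ∫ s : ℝ, (F' s * G (u - s) - F s * G' (u - s)) = 0 := by
    filter_upwards [hFG, hFG'] with u hu hu'
    refine integral_eq_zero_of_hasDerivAt_of_integrable (fun s => ?_) hu' hu
    have dGu : HasDerivAt (fun s => G (u - s)) (-G' (u - s)) s := by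
      simpa [Function.comp_def] using (dG (u - s)).scomp s ((hasDerivAt_id s).const_sub u)
    exact ((dF s).mul dGu).congr_deriv (by ring)
  have hk' := shear.integrable_comp_of_integrable hk
  calc ∫ p : ℝ × ℝ, k (p.1 + p.2) * (F' p.1 * G p.2 - F p.1 * G' p.2)
      = ∫ u : ℝ, ∫ s : ℝ, k (s + (u - s)) * (F' s * G (u - s) - F s * G' (u - s)) := by
        rw [← shear.map_eq, integral_map shear.aemeasurable (by rw [shear.map_eq]; exact hk.1)]
        exact integral_prod _ hk'
    _ = ∫ u : ℝ, k u * ∫ s : ℝ, (F' s * G (u - s) - F s * G' (u - s)) := by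
        simp only [add_sub_cancel, integral_const_mul]
    _ = 0 := integral_eq_zero_of_ae <| inner_eq_zero.mono fun u hu => by simp [hu]

theorem integrable_norm_ofReal_add_pow_mul_exp_neg_mul_sq {b : ℝ} (hb : 0 < b) (c : ℂ) (n : ℕ) :
    Integrable fun t : ℝ => ‖(t : ℂ) + c‖ ^ n * Real.exp (-b * t ^ 2) := by
  have hpow : Integrable fun t : ℝ => |t| ^ n * Real.exp (-b * t ^ 2) := by
    simpa [abs_mul] using
      (integrable_rpow_mul_exp_neg_mul_sq hb (s := n) (by linarith [n.cast_nonneg (α := ℝ)])).norm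
  refine ((hpow.add ((integrable_exp_neg_mul_sq hb).const_mul (‖c‖ ^ n))).const_mul
    (2 ^ (n - 1))).mono' (Continuous.aestronglyMeasurable (by fun_prop)) (.of_forall fun t => ?_)
  have hadd : ‖(t : ℂ) + c‖ ^ n ≤ 2 ^ (n - 1) * (|t| ^ n + ‖c‖ ^ n) :=
    calc ‖(t : ℂ) + c‖ ^ n ≤ (|t| + ‖c‖) ^ n := by
          gcongr
          simpa using norm_add_le (t : ℂ) c
      _ ≤ 2 ^ (n - 1) * (|t| ^ n + ‖c‖ ^ n) := add_pow_le (abs_nonneg t) (norm_nonneg c) n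
  rw [Real.norm_of_nonneg (by positivity)]
  calc ‖(t : ℂ) + c‖ ^ n * Real.exp (-b * t ^ 2)
      ≤ 2 ^ (n - 1) * (|t| ^ n + ‖c‖ ^ n) * Real.exp (-b * t ^ 2) := by gcongr
    _ = 2 ^ (n - 1) * (|t| ^ n * Real.exp (-b * t ^ 2) + ‖c‖ ^ n * Real.exp (-b * t ^ 2)) := by
        ring

theorem tendsto_intervalIntegral_of_tendsto_integral_vertical_zero {E : Type*}
    [NormedAddCommGroup E] [NormedSpace ℂ E] [CompleteSpace E] {f : ℂ → E}
    (hf : Differentiable ℂ f) {b : ℝ}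
    (hfint : Integrable fun t : ℝ => f (t + b * I))
    (hvert : Tendsto (fun T : ℝ => ∫ u in (0 : ℝ)..b, f (T + u * I)) (cocompact ℝ) (𝓝 0)) :
    Tendsto (fun T : ℝ => ∫ s in (-T)..T, f s) atTop (𝓝 (∫ t : ℝ, f (t + b * I))) := by
  have htop := intervalIntegral_tendsto_integral hfint tendsto_neg_atTop_atBot tendsto_id
  have hright := (hvert.mono_left atTop_le_cocompact).const_smul I
  have hleft := ((hvert.mono_left atBot_le_cocompact).comp tendsto_neg_atTop_atBot).const_smul I
  have hsum := (htop.sub hright).add hleft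
  rw [smul_zero, sub_zero, add_zero] at hsum
  refine hsum.congr fun T => ?_
  have hrect := integral_boundary_rect_eq_zero_of_differentiableOn f
    ((-T : ℝ) : ℂ) (T + b * I) hf.differentiableOn
  simp only [ofReal_re, ofReal_im, add_re, add_im, mul_re, mul_im, I_re, I_im, mul_zero, mul_one,
    add_zero, zero_add, sub_zero, ofReal_zero, zero_mul] at hrect
  rw [← sub_eq_zero, ← neg_eq_zero, ← hrect]
  simp only [id, Function.comp_apply]
  abel

theorem ofReal_deriv_eq_of_hasDerivAt_ofReal {f : ℝ → ℝ} {f' : ℂ} {x : ℝ}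
    (h : HasDerivAt (fun v => (f v : ℂ)) f' x) : ((deriv f x : ℝ) : ℂ) = f' := by
  have hre : HasDerivAt f f'.re x := by
    simpa [Function.comp_def] using (reCLM.hasFDerivAt (x := (f x : ℂ))).comp_hasDerivAt x h
  rw [hre.deriv]
  exact hre.ofReal_comp.unique h

theorem norm_inv_ofReal_add_ofReal_mul_I_le (u : ℝ) {c : ℝ} (hc : 0 < c) :
    ‖((u : ℂ) + c * I)⁻¹‖ ≤ c⁻¹ := by
  rw [norm_inv]
  gcongr
  simpa [abs_of_pos hc] using abs_im_le_norm ((u : ℂ) + c * I)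

/-- The integrand `e^{i(w³/3 + wx)}` of the contour representation of the Airy function. -/
noncomputable def airyIntegrand (x : ℝ) (w : ℂ) : ℂ :=
  exp (I * (w ^ 3 / 3 + w * x))

/-- The `n`-th moment `∫ wⁿ e^{i(w³/3 + wx)} dw` of the Airy integrand over the horizontal line
`Im w = b`, parametrized as `w = t + bi`. It represents derivatives of the Airy function. -/
noncomputable def airyMoment (b : ℝ) (n : ℕ) (x : ℝ) : ℂ :=
  ∫ t : ℝ, ((t : ℂ) + b * I) ^ n * airyIntegrand x (t + b * I)

theorem differentiable_airyIntegrand (x : ℝ) : Differentiable ℂ (airyIntegrand x) := by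
  unfold airyIntegrand
  fun_prop

@[fun_prop]
theorem continuous_airyIntegrand (x : ℝ) : Continuous (airyIntegrand x) :=
  (differentiable_airyIntegrand x).continuous

theorem hasDerivAt_airyIntegrand (x : ℝ) (w : ℂ) :
    HasDerivAt (airyIntegrand x) (I * (w ^ 2 + x) * airyIntegrand x w) w := by
  have hphase : HasDerivAt (fun w : ℂ => I * (w ^ 3 / 3 + w * x)) (I * (w ^ 2 + x)) w := by
    refine (((((hasDerivAt_id w).pow 3).div_const 3).add
      ((hasDerivAt_id w).mul_const (x : ℂ))).const_mul I).congr_deriv ?_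
    simp
  exact hphase.cexp.congr_deriv (mul_comm _ _)

theorem hasDerivAt_airyIntegrand_horizontal (b x t : ℝ) :
    HasDerivAt (fun t : ℝ => airyIntegrand x (t + b * I))
      (I * (((t : ℂ) + b * I) ^ 2 + x) * airyIntegrand x (t + b * I)) t := by
  have hline : HasDerivAt (fun t : ℝ => (t : ℂ) + b * I) 1 t :=
    (hasDerivAt_id t).ofReal_comp.add_const _
  simpa [Function.comp_def] using (hasDerivAt_airyIntegrand x _).comp t hline

theorem hasDerivAt_airyIntegrand_param (w : ℂ) (x : ℝ) :
    HasDerivAt (fun v : ℝ => airyIntegrand v w) (I * w * airyIntegrand x w) x := by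
  have hphase : HasDerivAt (fun v : ℝ => I * (w ^ 3 / 3 + w * v)) (I * w) x := by
    simpa using (((hasDerivAt_id x).ofReal_comp.const_mul w).const_add (w ^ 3 / 3)).const_mul I
  exact hphase.cexp.congr_deriv (mul_comm _ _)

theorem norm_airyIntegrand (x t b : ℝ) :
    ‖airyIntegrand x (t + b * I)‖ = Real.exp (b ^ 3 / 3 - b * x) * Real.exp (-b * t ^ 2) := by
  rw [airyIntegrand, norm_exp, ← Real.exp_add]
  congr 1
  simp only [pow_succ, pow_zero, one_mul, mul_re, I_re, add_re, div_ofNat_re, ofReal_re, mul_zero,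
    ofReal_im, I_im, mul_one, sub_self, add_zero, add_im, mul_im, zero_add, sub_zero, zero_mul,
    div_ofNat_im, zero_sub, neg_add_rev, neg_mul]
  ring

theorem integrable_pow_mul_airyIntegrand {b : ℝ} (hb : 0 < b) (n : ℕ) (x : ℝ) :
    Integrable fun t : ℝ => ((t : ℂ) + b * I) ^ n * airyIntegrand x (t + b * I) := by
  refine ((integrable_norm_ofReal_add_pow_mul_exp_neg_mul_sq hb (b * I) n).const_mul
    (Real.exp (b ^ 3 / 3 - b * x))).mono' (Continuous.aestronglyMeasurable (by fun_prop))
    (.of_forall fun t => le_of_eq ?_)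
  rw [norm_mul, norm_pow, norm_airyIntegrand]
  ring

theorem integrable_airyIntegrand {b : ℝ} (hb : 0 < b) (x : ℝ) :
    Integrable fun t : ℝ => airyIntegrand x (t + b * I) := by
  simpa using integrable_pow_mul_airyIntegrand hb 0 x

theorem integrable_deriv_airyIntegrand {b : ℝ} (hb : 0 < b) (x : ℝ) :
    Integrable fun t : ℝ => I * (((t : ℂ) + b * I) ^ 2 + x) * airyIntegrand x (t + b * I) := by
  convert! ((integrable_pow_mul_airyIntegrand hb 2 x).add
    ((integrable_airyIntegrand hb x).const_mul (x : ℂ))).const_mul I using 2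
  simp only [Pi.add_apply]
  ring

theorem hasDerivAt_airyMoment {b : ℝ} (hb : 0 < b) (n : ℕ) (x : ℝ) :
    HasDerivAt (airyMoment b n) (I * airyMoment b (n + 1) x) x := by
  have hderiv := (hasDerivAt_integral_of_dominated_loc_of_deriv_le
    (F := fun v t : ℝ => ((t : ℂ) + b * I) ^ n * airyIntegrand v (t + b * I))
    (F' := fun v t : ℝ => I * (((t : ℂ) + b * I) ^ (n + 1) * airyIntegrand v (t + b * I)))
    (bound := fun t : ℝ => Real.exp (b ^ 3 / 3 - b * (x - 1)) *
      (‖(t : ℂ) + b * I‖ ^ (n + 1) * Real.exp (-b * t ^ 2)))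
    (Metric.ball_mem_nhds x one_pos)
    (.of_forall fun v => (integrable_pow_mul_airyIntegrand hb n v).1)
    (integrable_pow_mul_airyIntegrand hb n x)
    ((integrable_pow_mul_airyIntegrand hb (n + 1) x).const_mul I).1
    (.of_forall fun t v hv => ?_)
    ((integrable_norm_ofReal_add_pow_mul_exp_neg_mul_sq hb _ _).const_mul _)
    (.of_forall fun t v _ => ?_)).2
  · rwa [integral_const_mul] at hderiv
  · have hxv : x - 1 ≤ v := by linarith [(abs_lt.1 (Metric.mem_ball.1 hv)).1]
    rw [norm_mul, norm_I, one_mul, norm_mul, norm_pow, norm_airyIntegrand, mul_left_comm]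
    gcongr
  · exact ((hasDerivAt_airyIntegrand_param _ v).const_mul _).congr_deriv (by ring)

theorem tendsto_integral_airyIntegrand_vertical {b : ℝ} (hb : 0 ≤ b) (x : ℝ) :
    Tendsto (fun T : ℝ => ∫ u in (0 : ℝ)..b, airyIntegrand x (T + u * I))
      (cocompact ℝ) (𝓝 0) := by
  have : (cocompact ℝ).IsCountablyGenerated := by
    rw [cocompact_eq_atBot_atTop]
    infer_instance
  suffices Tendsto (fun T : ℝ => ∫ u in (0 : ℝ)..b, airyIntegrand x (T + u * I))
      (cocompact ℝ) (𝓝 (∫ _ in (0 : ℝ)..b, 0)) by simpa using this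
  refine intervalIntegral.tendsto_integral_filter_of_dominated_convergence
    (fun u => Real.exp (u ^ 3 / 3 - u * x))
    (.of_forall fun T => Continuous.aestronglyMeasurable (by fun_prop))
    (.of_forall fun T => .of_forall fun u hu => ?_)
    (Continuous.intervalIntegrable (by fun_prop) _ _)
    (.of_forall fun u hu => ?_) <;> rw [Set.uIoc_of_le hb] at hu
  · rw [norm_airyIntegrand]
    refine mul_le_of_le_one_right (Real.exp_pos _).le (Real.exp_le_one_iff.2 ?_)
    nlinarith [hu.1, sq_nonneg T]
  · simp only [tendsto_zero_iff_norm_tendsto_zero (f := fun _ => airyIntegrand _ _),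
      norm_airyIntegrand]
    have hsq : Tendsto (fun T : ℝ => u * T ^ 2) (cocompact ℝ) atTop := by
      simpa using ((tendsto_pow_atTop two_ne_zero).comp
        (tendsto_norm_cocompact_atTop (E := ℝ))).const_mul_atTop hu.1
    simpa using (Real.tendsto_exp_neg_atTop_nhds_zero.comp hsq).const_mul
      (Real.exp (u ^ 3 / 3 - u * x))

theorem integral_airyIntegrand_symmetric (x T : ℝ) :
    ∫ s in (-T)..T, airyIntegrand x s =
      ((2 * ∫ s in (0 : ℝ)..T, Real.cos (s ^ 3 / 3 + s * x) : ℝ) : ℂ) := by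
  have hfint (a b : ℝ) : IntervalIntegrable (fun s : ℝ => airyIntegrand x s) volume a b :=
    Continuous.intervalIntegrable (by fun_prop) a b
  have hfint_neg : IntervalIntegrable (fun s : ℝ => airyIntegrand x (-s : ℝ)) volume 0 T :=
    Continuous.intervalIntegrable (by fun_prop) 0 T
  have hreflect : ∫ s in (-T)..0, airyIntegrand x s = ∫ s in 0..T, airyIntegrand x (-s : ℝ) := by
    simpa using (intervalIntegral.integral_comp_neg (a := 0) (b := T)
      fun s : ℝ => airyIntegrand x s).symm
  rw [← intervalIntegral.integral_add_adjacent_intervals (hfint (-T) 0) (hfint 0 T), hreflect,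
    ← intervalIntegral.integral_add hfint_neg (hfint 0 T),
    ← intervalIntegral.integral_const_mul, ← intervalIntegral.integral_ofReal]
  congr 1 with s
  push_cast
  rw [two_cos, add_comm, airyIntegrand, airyIntegrand]
  congr 2 <;> ring

theorem tendsto_two_mul_integral_cos {b : ℝ} (hb : 0 < b) (x : ℝ) :
    Tendsto (fun T : ℝ => ((2 * ∫ s in (0 : ℝ)..T, Real.cos (s ^ 3 / 3 + s * x) : ℝ) : ℂ))
      atTop (𝓝 (airyMoment b 0 x)) := by
  have h := tendsto_intervalIntegral_of_tendsto_integral_vertical_zero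
    (differentiable_airyIntegrand x) (integrable_airyIntegrand hb x)
    (tendsto_integral_airyIntegrand_vertical hb.le x)
  simpa only [airyMoment, pow_zero, one_mul, integral_airyIntegrand_symmetric] using h

theorem Ai_eq_airyMoment {b : ℝ} (hb : 0 < b) (x : ℝ) :
    (Ai x : ℂ) = (2 * Real.pi : ℂ)⁻¹ * airyMoment b 0 x := by
  have hlim := tendsto_two_mul_integral_cos hb x
  have hre := (continuous_re.tendsto _).comp hlim
  have hreal : ((airyMoment b 0 x).re : ℂ) = airyMoment b 0 x :=
    tendsto_nhds_unique ((continuous_ofReal.tendsto _).comp hre) hlim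
  have hcos : Tendsto (fun T : ℝ => ∫ s in (0 : ℝ)..T, Real.cos (s ^ 3 / 3 + s * x)) atTop
      (𝓝 ((airyMoment b 0 x).re / 2)) := by
    simpa using hre.div_const 2
  rw [Ai, hcos.limUnder_eq, ← hreal]
  push_cast
  rw [ofReal_re]
  ring

theorem deriv_Ai_eq_airyMoment {b : ℝ} (hb : 0 < b) (x : ℝ) :
    ((deriv Ai x : ℝ) : ℂ) = (2 * Real.pi : ℂ)⁻¹ * (I * airyMoment b 1 x) := by
  refine ofReal_deriv_eq_of_hasDerivAt_ofReal ?_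
  simpa only [Ai_eq_airyMoment hb] using (hasDerivAt_airyMoment hb 0 x).const_mul _

theorem integrable_airyIntegrand_mul_div_add {a b : ℝ} (ha : 0 < a) (hb : 0 < b) (x y : ℝ) :
    Integrable fun p : ℝ × ℝ => airyIntegrand x (p.1 + a * I) * airyIntegrand y (p.2 + b * I) /
      ((p.1 + a * I) + (p.2 + b * I)) := by
  have hadd (p : ℝ × ℝ) :
      (p.1 + a * I) + (p.2 + b * I) = ((p.1 + p.2 : ℝ) : ℂ) + ((a + b : ℝ) : ℂ) * I := by
    push_cast
    ring
  simp only [hadd, div_eq_mul_inv]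
  exact ((integrable_airyIntegrand ha x).mul_prod (integrable_airyIntegrand hb y)).mul_bdd
    (Measurable.aestronglyMeasurable (by fun_prop))
    (.of_forall fun p => norm_inv_ofReal_add_ofReal_mul_I_le (p.1 + p.2) (add_pos ha hb))

theorem sub_mul_airyIntegrand_mul_eq_sub (a b x y : ℝ) :
    (fun p : ℝ × ℝ => ((p.1 + a * I) - (p.2 + b * I)) *
        (airyIntegrand x (p.1 + a * I) * airyIntegrand y (p.2 + b * I))) =
      fun p : ℝ × ℝ => (p.1 + a * I) ^ 1 * airyIntegrand x (p.1 + a * I) *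
          ((p.2 + b * I) ^ 0 * airyIntegrand y (p.2 + b * I)) -
        (p.1 + a * I) ^ 0 * airyIntegrand x (p.1 + a * I) *
          ((p.2 + b * I) ^ 1 * airyIntegrand y (p.2 + b * I)) := by
  ext p
  ring

theorem integrable_sub_mul_airyIntegrand_mul {a b : ℝ} (ha : 0 < a) (hb : 0 < b) (x y : ℝ) :
    Integrable fun p : ℝ × ℝ => ((p.1 + a * I) - (p.2 + b * I)) *
      (airyIntegrand x (p.1 + a * I) * airyIntegrand y (p.2 + b * I)) := by
  rw [sub_mul_airyIntegrand_mul_eq_sub]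
  exact ((integrable_pow_mul_airyIntegrand ha 1 x).mul_prod
    (integrable_pow_mul_airyIntegrand hb 0 y)).sub
    ((integrable_pow_mul_airyIntegrand ha 0 x).mul_prod (integrable_pow_mul_airyIntegrand hb 1 y))

theorem integral_sub_mul_airyIntegrand_mul {a b : ℝ} (ha : 0 < a) (hb : 0 < b) (x y : ℝ) :
    ∫ p : ℝ × ℝ, ((p.1 + a * I) - (p.2 + b * I)) *
        (airyIntegrand x (p.1 + a * I) * airyIntegrand y (p.2 + b * I)) =
      airyMoment a 1 x * airyMoment b 0 y - airyMoment a 0 x * airyMoment b 1 y := by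
  simp only [airyMoment, ← integral_prod_mul]
  rw [sub_mul_airyIntegrand_mul_eq_sub]
  exact integral_sub
    ((integrable_pow_mul_airyIntegrand ha 1 x).mul_prod (integrable_pow_mul_airyIntegrand hb 0 y))
    ((integrable_pow_mul_airyIntegrand ha 0 x).mul_prod (integrable_pow_mul_airyIntegrand hb 1 y))

theorem inv_add_mul_sub_deriv_airyIntegrand {a b : ℝ} (hab : a + b ≠ 0) (x y : ℝ) (p : ℝ × ℝ) :
    (((p.1 + p.2 : ℝ) : ℂ) + (a + b) * I)⁻¹ *
        (I * ((p.1 + a * I) ^ 2 + x) * airyIntegrand x (p.1 + a * I) *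
            airyIntegrand y (p.2 + b * I) -
          airyIntegrand x (p.1 + a * I) *
            (I * ((p.2 + b * I) ^ 2 + y) * airyIntegrand y (p.2 + b * I))) =
      I * ((x - y) * (airyIntegrand x (p.1 + a * I) * airyIntegrand y (p.2 + b * I) /
            ((p.1 + a * I) + (p.2 + b * I))) +
          ((p.1 + a * I) - (p.2 + b * I)) *
            (airyIntegrand x (p.1 + a * I) * airyIntegrand y (p.2 + b * I))) := by
  have hne : (p.1 + a * I) + (p.2 + b * I) ≠ 0 := fun h => hab (by simpa using congrArg im h)
  have hadd : ((p.1 + p.2 : ℝ) : ℂ) + (a + b) * I = (p.1 + a * I) + (p.2 + b * I) := by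
    push_cast
    ring
  rw [hadd]
  generalize airyIntegrand x (p.1 + a * I) = f, airyIntegrand y (p.2 + b * I) = g
  generalize (p.1 : ℂ) + a * I = z, (p.2 : ℂ) + b * I = w at *
  field_simp
  ring

theorem sub_mul_integral_airyIntegrand_mul_div_add {a b : ℝ} (ha : 0 < a) (hb : 0 < b) (x y : ℝ) :
    (x - y) * ∫ p : ℝ × ℝ, airyIntegrand x (p.1 + a * I) * airyIntegrand y (p.2 + b * I) /
        ((p.1 + a * I) + (p.2 + b * I)) =
      airyMoment a 0 x * airyMoment b 1 y - airyMoment a 1 x * airyMoment b 0 y := by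
  have hcoupled := (integrable_airyIntegrand_mul_div_add ha hb x y).const_mul (x - y : ℂ)
  have hdecoupled := integrable_sub_mul_airyIntegrand_mul ha hb x y
  have hpointwise := inv_add_mul_sub_deriv_airyIntegrand (add_pos ha hb).ne' x y
  have hparts := integral_prod_comp_add_mul_sub_deriv_eq_zero
    (k := fun u : ℝ => (u + (a + b) * I)⁻¹)
    (integrable_airyIntegrand ha x) (integrable_deriv_airyIntegrand ha x)
    (integrable_airyIntegrand hb y) (integrable_deriv_airyIntegrand hb y)
    (hasDerivAt_airyIntegrand_horizontal a x) (hasDerivAt_airyIntegrand_horizontal b y)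
    (((hcoupled.add hdecoupled).const_mul I).congr (.of_forall fun p => (hpointwise p).symm))
  rw [integral_congr_ae (.of_forall hpointwise), integral_const_mul,
    integral_add hcoupled hdecoupled, integral_const_mul,
    integral_sub_mul_airyIntegrand_mul ha hb] at hparts
  linear_combination (mul_eq_zero.1 hparts).resolve_left I_ne_zero

theorem integral_integral_eq_I_mul_integral_airyIntegrand {a b : ℝ} (ha : 0 < a) (hb : 0 < b)
    (x y : ℝ) :
    ∫ s : ℝ, ∫ t : ℝ,
        exp (-I * ((s - a * I) ^ 3 / 3 + (s - a * I) * x)) *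
          exp (I * ((t + b * I) ^ 3 / 3 + (t + b * I) * y)) /
          (I * ((s - a * I) - (t + b * I))) =
      I * ∫ p : ℝ × ℝ, airyIntegrand x (p.1 + a * I) * airyIntegrand y (p.2 + b * I) /
        ((p.1 + a * I) + (p.2 + b * I)) := by
  rw [← integral_neg_eq_self, ← integral_const_mul, Measure.volume_eq_prod, integral_prod _
    ((integrable_airyIntegrand_mul_div_add ha hb x y).const_mul I)]
  congr! 4 with s t
  have hexp : exp (-I * (((-s : ℝ) - a * I) ^ 3 / 3 + ((-s : ℝ) - a * I) * x)) =
      airyIntegrand x (s + a * I) := by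
    rw [airyIntegrand]
    push_cast
    ring_nf
  have hden : I * (((-s : ℝ) - a * I) - (t + b * I)) = -I * ((s + a * I) + (t + b * I)) := by
    push_cast
    ring
  rw [hexp, hden, ← airyIntegrand, div_mul_eq_div_div_swap, div_neg, div_I]
  ring

theorem double_integral_eq_airy_kernel_general {a b : ℝ} (ha : 0 < a) (hb : 0 < b)
    {x y : ℝ} (hxy : x ≠ y) :
    (((2 * Real.pi)⁻¹ ^ 2 : ℝ) : ℂ) *
        ∫ s : ℝ, ∫ t : ℝ,
          exp (-I * ((s - a * I) ^ 3 / 3 + (s - a * I) * x)) *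
            exp (I * ((t + b * I) ^ 3 / 3 + (t + b * I) * y)) /
            (I * ((s - a * I) - (t + b * I)))
      = ((KAiry x y : ℝ) : ℂ) := by
  have hsub : (x - y : ℂ) ≠ 0 := sub_ne_zero.2 (ofReal_injective.ne hxy)
  rw [integral_integral_eq_I_mul_integral_airyIntegrand ha hb, KAiry, if_neg hxy]
  push_cast
  rw [eq_div_iff hsub, Ai_eq_airyMoment ha x, Ai_eq_airyMoment hb y, deriv_Ai_eq_airyMoment ha x,
    deriv_Ai_eq_airyMoment hb y]
  linear_combination (2 * Real.pi : ℂ)⁻¹ ^ 2 * I *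
    sub_mul_integral_airyIntegrand_mul_div_add ha hb x y

/-- The double contour integral over the horizontal lines `Im z' = -1`
(`z' = s - i`) and `Im w' = +1` (`w' = t + i`) of
`e^{-i(z'³/3 + z'x)} e^{i(w'³/3 + w'y)} / (i(z' - w'))`, times `(2π)^{-2}`,
equals the Airy kernel `K_Airy(x, y)`. -/
theorem double_integral_eq_airy_kernel (x y : ℝ) (hxy : x ≠ y) :
    (((2 * Real.pi)⁻¹ ^ 2 : ℝ) : ℂ) *
        ∫ s : ℝ, ∫ t : ℝ,
          Complex.exp (-Complex.I *
              (((s : ℂ) - Complex.I) ^ 3 / 3 + ((s : ℂ) - Complex.I) * (x : ℂ))) *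
            Complex.exp (Complex.I *
              (((t : ℂ) + Complex.I) ^ 3 / 3 + ((t : ℂ) + Complex.I) * (y : ℂ))) /
            (Complex.I * (((s : ℂ) - Complex.I) - ((t : ℂ) + Complex.I)))
      = ((KAiry x y : ℝ) : ℂ) := by
  simpa using double_integral_eq_airy_kernel_general one_pos one_pos hxy
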